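/- Let U ≥ 1 be a natural number and let p ≥ 1 be a precision with p ≤ ⌈log₂(U+1)⌉. Then the number of distinct rounded values of integers in the range 1, …, U is at most (⌈log₂(U+1)⌉ − p + 1) · 2^p; that is, the cardinality of the image of the set {1, 2, …, U} under the map x ↦ round_p(x) is at most (⌈log₂(U+1)⌉ − p + 1) · 2^p. -/

import Mathlib

/-- Position of the highest-order nonzero bit of `x`: `b(x) = ⌊log₂ x⌋ + 1`. -/
def bpos (x : ℕ) : ℕ := Nat.log 2 x + 1

/-- Rounding of `x` to precision `p`: keep the `p` most significant bits,
zeroing out the `b(x) - p` lowest-order bits. -/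
def roundP (p x : ℕ) : ℕ :=
  if bpos x ≤ p then x else 2 ^ (bpos x - p) * (x / 2 ^ (bpos x - p))

/-! Every rounded value is `m * 2 ^ e` with a mantissa `m` of at most `p` bits and an exponent
`e = b(x) - p`, truncated at zero. If `b(x) ≤ n` for all arguments `x`, there are at most `2 ^ p`
choices of `m` and `n - p + 1` of `e`; for `1 ≤ x ≤ U` one can take `n = ⌈log₂ (U + 1)⌉`, since
`b(x) = ⌈log₂ (x + 1)⌉`. -/

theorem lt_two_pow_bpos (x : ℕ) : x < 2 ^ bpos x :=
  Nat.lt_pow_succ_log_self Nat.one_lt_two x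

theorem bpos_le_iff_lt_two_pow {x n : ℕ} (hx : x ≠ 0) : bpos x ≤ n ↔ x < 2 ^ n :=
  Nat.log_lt_iff_lt_pow Nat.one_lt_two hx

theorem bpos_eq_clog_add_one {x : ℕ} (hx : x ≠ 0) : bpos x = Nat.clog 2 (x + 1) :=
  eq_of_forall_ge_iff fun n => by
    rw [bpos_le_iff_lt_two_pow hx, Nat.clog_le_iff_le_pow Nat.one_lt_two, Nat.succ_le_iff]

theorem roundP_eq_two_pow_mul_div (p x : ℕ) :
    roundP p x = 2 ^ (bpos x - p) * (x / 2 ^ (bpos x - p)) := by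
  unfold roundP
  split_ifs with h
  · simp [Nat.sub_eq_zero_of_le h]
  · rfl

theorem div_two_pow_bpos_sub_lt (p x : ℕ) : x / 2 ^ (bpos x - p) < 2 ^ p := by
  apply Nat.div_lt_of_lt_mul
  calc x < 2 ^ bpos x := lt_two_pow_bpos x
    _ ≤ 2 ^ (bpos x - p + p) := Nat.pow_le_pow_right Nat.two_pos le_tsub_add
    _ = 2 ^ (bpos x - p) * 2 ^ p := pow_add ..

theorem image_roundP_subset_image₂ {s : Finset ℕ} {n : ℕ} (p : ℕ) (hs : ∀ x ∈ s, bpos x ≤ n) :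
    s.image (roundP p) ⊆
      Finset.image₂ (fun e m => 2 ^ e * m)
        (Finset.range (n - p + 1)) (Finset.range (2 ^ p)) := by
  refine Finset.image_subset_iff.mpr fun x hx => ?_
  rw [roundP_eq_two_pow_mul_div]
  have exponent_mem : bpos x - p ∈ Finset.range (n - p + 1) :=
    Finset.mem_range_succ_iff.mpr (Nat.sub_le_sub_right (hs x hx) p)
  have mantissa_mem : x / 2 ^ (bpos x - p) ∈ Finset.range (2 ^ p) :=
    Finset.mem_range.mpr (div_two_pow_bpos_sub_lt p x)
  exact Finset.mem_image₂_of_mem exponent_mem mantissa_mem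

theorem card_image_roundP_le {s : Finset ℕ} {n : ℕ} (p : ℕ) (hs : ∀ x ∈ s, bpos x ≤ n) :
    (s.image (roundP p)).card ≤ (n - p + 1) * 2 ^ p := by
  calc (s.image (roundP p)).card
      ≤ (Finset.image₂ (fun e m => 2 ^ e * m)
          (Finset.range (n - p + 1)) (Finset.range (2 ^ p))).card :=
        Finset.card_le_card (image_roundP_subset_image₂ p hs)
    _ ≤ (Finset.range (n - p + 1)).card * (Finset.range (2 ^ p)).card :=
        Finset.card_image₂_le ..
    _ = (n - p + 1) * 2 ^ p := by rw [Finset.card_range, Finset.card_range]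

theorem roundP_image_card_le (U p : ℕ) (hU : 1 ≤ U) (hp : 1 ≤ p)
    (hpU : p ≤ Nat.clog 2 (U + 1)) :
    ((Finset.Icc 1 U).image (roundP p)).card ≤ (Nat.clog 2 (U + 1) - p + 1) * 2 ^ p := by
  refine card_image_roundP_le p fun x hx => ?_
  obtain ⟨one_le_x, x_le_U⟩ := Finset.mem_Icc.mp hx
  rw [bpos_eq_clog_add_one (Nat.one_le_iff_ne_zero.mp one_le_x)]
  exact Nat.clog_mono_right 2 (Nat.succ_le_succ x_le_U)
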